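/- arXiv:2210.10605 — 4 statements merged into one kernel-verified Lean document; each statement's English description precedes it below -/
import Mathlib

section
/- (Descent at the x-update of linearized ADMM.) Fix an iteration index k. If x_{k+1} is a global minimizer over ℝ^n of the map x ↦ L̃ᵏ_β(x, z_k, w_k), then L_β(x_k, z_k, w_k) − L_β(x_{k+1}, z_k, w_k) ≥ ((L_x − β‖H‖²)/2) · ‖x_k − x_{k+1}‖². -/
/-!
Comparing the minimizer `xk1` with the single point `xk` already suffices: the linear term of
the linearized Lagrangian is exactly the first-order part of `β / 2 * ‖H x - zk‖ ^ 2` at `xk`,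
so in the difference of augmented Lagrangians only the second-order part
`β / 2 * ‖H (xk1 - xk)‖ ^ 2` remains, and it is bounded through the operator norm of `H`.
-/

open scoped RealInnerProductSpace

noncomputable section

/-- Descent at the x-update of linearized ADMM. -/
theorem ladmm_x_update_descent
    (n p : ℕ)
    (H : EuclideanSpace ℝ (Fin n) →L[ℝ] EuclideanSpace ℝ (Fin p))
    (f : EuclideanSpace ℝ (Fin n) → ℝ)
    (h : EuclideanSpace ℝ (Fin p) → ℝ) (hh : Differentiable ℝ h)
    (β Lx : ℝ) (hβ : 0 < β) (hLx : 0 < Lx)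
    (xk xk1 : EuclideanSpace ℝ (Fin n))
    (zk wk : EuclideanSpace ℝ (Fin p))
    (L : EuclideanSpace ℝ (Fin n) → EuclideanSpace ℝ (Fin p) → EuclideanSpace ℝ (Fin p) → ℝ)
    (hL : ∀ x z w, L x z w = h z + f x + ⟪w, H x - z⟫ + β / 2 * ‖H x - z‖ ^ 2)
    (Lt : EuclideanSpace ℝ (Fin n) → EuclideanSpace ℝ (Fin p) → EuclideanSpace ℝ (Fin p) → ℝ)
    (hLt : ∀ x z w, Lt x z w = h z + f x + ⟪w, H x - z⟫ + Lx / 2 * ‖x - xk‖ ^ 2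
      + β * ⟪x - xk, (ContinuousLinearMap.adjoint H) (H xk - z)⟫)
    (hmin : ∀ x, Lt xk1 zk wk ≤ Lt x zk wk) :
    L xk zk wk - L xk1 zk wk ≥ (Lx - β * ‖H‖ ^ 2) / 2 * ‖xk - xk1‖ ^ 2 := by
  have hm := hmin xk
  rw [hLt, hLt, ContinuousLinearMap.adjoint_inner_right] at hm
  simp only [sub_self, norm_zero, inner_zero_left, ne_eq, OfNat.ofNat_ne_zero, not_false_eq_true,
    zero_pow, mul_zero, add_zero] at hm
  have hexp : ‖H xk1 - zk‖ ^ 2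
      = ‖H (xk1 - xk)‖ ^ 2 + 2 * ⟪H (xk1 - xk), H xk - zk⟫ + ‖H xk - zk‖ ^ 2 := by
    rw [← norm_add_sq_real, map_sub, sub_add_sub_cancel]
  have hop : ‖H (xk1 - xk)‖ ^ 2 ≤ ‖H‖ ^ 2 * ‖xk1 - xk‖ ^ 2 := by
    rw [← mul_pow]
    gcongr
    exact H.le_opNorm _
  have hop' := mul_le_mul_of_nonneg_left hop hβ.le
  rw [hL, hL, hexp, norm_sub_rev xk xk1]
  linarith
end
end

section
/- (Increase at the w-update is controlled by the z-residual.) Fix an iteration index k. Assume ∇h is L_h-Lipschitz, w_k = ∇h(z_k), w_{k+1} = ∇h(z_{k+1}), and w_{k+1} = w_k + β(Hx_{k+1} − z_{k+1}). Then L_β(x_{k+1}, z_{k+1}, w_{k+1}) − L_β(x_{k+1}, z_{k+1}, w_k) = (1/β)‖w_{k+1} − w_k‖², and this quantity is at most (L_h²/β)‖z_{k+1} − z_k‖². -/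
/-!
The augmented Lagrangian is affine in `w` with slope the residual `H x - z`. The multiplier step
`wk1 - wk` is `β` times this residual, so the increase is `β * ‖H xk1 - zk1‖ ^ 2`, which equals
`1 / β * ‖wk1 - wk‖ ^ 2`. Since both multipliers are gradients of `h`, the Lipschitz bound on the
gradient controls this by the change in `z`.
-/

open scoped RealInnerProductSpace

noncomputable section

/-- Increase at the w-update is controlled by the z-residual. -/
theorem ladmm_w_update_increase
    (n p : ℕ)
    (H : EuclideanSpace ℝ (Fin n) →L[ℝ] EuclideanSpace ℝ (Fin p))
    (f : EuclideanSpace ℝ (Fin n) → ℝ)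
    (h : EuclideanSpace ℝ (Fin p) → ℝ) (hh : Differentiable ℝ h)
    (Lh β : ℝ) (hLh : 0 < Lh) (hβ : 0 < β)
    (hlip : ∀ z1 z2 : EuclideanSpace ℝ (Fin p),
      ‖gradient h z1 - gradient h z2‖ ≤ Lh * ‖z1 - z2‖)
    (xk1 : EuclideanSpace ℝ (Fin n))
    (zk zk1 wk wk1 : EuclideanSpace ℝ (Fin p))
    (L : EuclideanSpace ℝ (Fin n) → EuclideanSpace ℝ (Fin p) → EuclideanSpace ℝ (Fin p) → ℝ)
    (hL : ∀ x z w, L x z w = h z + f x + ⟪w, H x - z⟫ + β / 2 * ‖H x - z‖ ^ 2)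
    (hwk : wk = gradient h zk)
    (hwk1 : wk1 = gradient h zk1)
    (hw : wk1 = wk + β • (H xk1 - zk1)) :
    L xk1 zk1 wk1 - L xk1 zk1 wk = 1 / β * ‖wk1 - wk‖ ^ 2 ∧
    1 / β * ‖wk1 - wk‖ ^ 2 ≤ Lh ^ 2 / β * ‖zk1 - zk‖ ^ 2 := by
  constructor
  · have hd : wk1 - wk = β • (H xk1 - zk1) := by rw [hw]; abel
    have hi : ⟪wk1, H xk1 - zk1⟫ - ⟪wk, H xk1 - zk1⟫ = β * ‖H xk1 - zk1‖ ^ 2 := by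
      rw [← inner_sub_left, hd, real_inner_smul_left, real_inner_self_eq_norm_sq]
    have hn : 1 / β * ‖wk1 - wk‖ ^ 2 = β * ‖H xk1 - zk1‖ ^ 2 := by
      rw [hd, norm_smul, Real.norm_of_nonneg hβ.le]
      field_simp
    rw [hn, hL, hL]
    linarith
  · have hb : ‖wk1 - wk‖ ≤ Lh * ‖zk1 - zk‖ := by
      rw [hwk, hwk1]
      exact hlip zk1 zk
    calc 1 / β * ‖wk1 - wk‖ ^ 2 ≤ 1 / β * (Lh * ‖zk1 - zk‖) ^ 2 := by gcongr
      _ = Lh ^ 2 / β * ‖zk1 - zk‖ ^ 2 := by ring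
end
end

section
/- (Sufficient decrease of the Lagrangian values along LADMM.) Assume h is m-strongly convex with L_h-Lipschitz gradient, and that w_k = ∇h(z_k) for every k. Then for every k, the values m_k := L_β(x_k, z_k, w_k) satisfy m_k − m_{k+1} ≥ ((L_x − β‖H‖²)/2)·‖x_k − x_{k+1}‖² + (m/2 − L_h²/β)·‖z_k − z_{k+1}‖². -/
/-!
One iteration splits into the `x`-update and the combined `(z, w)`-update.

Comparing the minimizer `x (k + 1)` with the anchor `x k` in the linearized Lagrangian bounds the
decrease of `f` plus its linear term; the linearization error of `β / 2 * ‖H x - z‖ ^ 2` is exactly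
`β / 2 * ‖H (x (k + 1) - x k)‖ ^ 2`, which yields the `‖x k - x (k + 1)‖ ^ 2` term.

For the other part, `w (k + 1)` is the gradient of `h` at `z (k + 1)`, so strong convexity
(`strong_convex_gradient_le`) bounds `h (z k) - h (z (k + 1))` from below. After expanding the
squares, the only negative term is `-β * ‖H x (k + 1) - z (k + 1)‖ ^ 2`. By the multiplier update it
equals `-‖w (k + 1) - w k‖ ^ 2 / β`, which the Lipschitz bound on the gradient controls.
-/

open scoped RealInnerProductSpace

noncomputable section

/-- First-order characterization of `m`-strong convexity, by restriction to the line through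
`a` and `b`. -/
theorem strong_convex_gradient_le {E : Type*} [NormedAddCommGroup E] [InnerProductSpace ℝ E]
    [CompleteSpace E] {h : E → ℝ} (hh : Differentiable ℝ h) {m : ℝ}
    (hconv : ConvexOn ℝ Set.univ (fun z => h z - m / 2 * ‖z‖ ^ 2)) (a b : E) :
    h a + ⟪gradient h a, b - a⟫ + m / 2 * ‖b - a‖ ^ 2 ≤ h b := by
  have hline : HasDerivAt (fun t : ℝ => AffineMap.lineMap a b t) (b - a) 0 :=
    AffineMap.hasDerivAt_lineMap
  have ha : HasFDerivAt h (InnerProductSpace.toDual ℝ E (gradient h a))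
      (AffineMap.lineMap a b (0 : ℝ)) := by
    simpa using (hh a).hasGradientAt.hasFDerivAt
  have hder := (ha.comp_hasDerivAt (0 : ℝ) hline).sub ((hline.norm_sq).const_mul (m / 2))
  have hc := hconv.comp_affineMap (AffineMap.lineMap a b : ℝ →ᵃ[ℝ] E)
  have key := hc.le_slope_of_hasDerivAt (x := 0) (y := 1) (Set.mem_univ _) (Set.mem_univ _)
    one_pos hder
  simp only [slope_def_field, Function.comp_apply, AffineMap.lineMap_apply_zero,
    AffineMap.lineMap_apply_one, InnerProductSpace.toDual_apply_apply, sub_zero, div_one] at key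
  rw [norm_sub_sq_real b a, real_inner_comm]
  rw [inner_sub_right a, real_inner_self_eq_norm_sq, real_inner_comm] at key
  rw [real_inner_comm a b] at *
  linarith

/-- Sufficient decrease of the augmented Lagrangian values along LADMM. -/
theorem ladmm_sufficient_decrease
    (n p : ℕ)
    (H : EuclideanSpace ℝ (Fin n) →L[ℝ] EuclideanSpace ℝ (Fin p))
    (f : EuclideanSpace ℝ (Fin n) → ℝ)
    (h : EuclideanSpace ℝ (Fin p) → ℝ) (hh : Differentiable ℝ h)
    (m Lh β Lx : ℝ) (hm : 0 < m) (hLh : 0 < Lh) (hβ : 0 < β) (hLx : 0 < Lx)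
    (hconv : ConvexOn ℝ Set.univ (fun z => h z - m / 2 * ‖z‖ ^ 2))
    (hlip : ∀ z1 z2 : EuclideanSpace ℝ (Fin p),
      ‖gradient h z1 - gradient h z2‖ ≤ Lh * ‖z1 - z2‖)
    (x : ℕ → EuclideanSpace ℝ (Fin n))
    (z w : ℕ → EuclideanSpace ℝ (Fin p))
    (L : EuclideanSpace ℝ (Fin n) → EuclideanSpace ℝ (Fin p) → EuclideanSpace ℝ (Fin p) → ℝ)
    (hL : ∀ x' z' w', L x' z' w' = h z' + f x' + ⟪w', H x' - z'⟫ + β / 2 * ‖H x' - z'‖ ^ 2)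
    (Lt : ℕ → EuclideanSpace ℝ (Fin n) → EuclideanSpace ℝ (Fin p) →
      EuclideanSpace ℝ (Fin p) → ℝ)
    (hLt : ∀ k x' z' w', Lt k x' z' w' = h z' + f x' + ⟪w', H x' - z'⟫
      + Lx / 2 * ‖x' - x k‖ ^ 2
      + β * ⟪x' - x k, (ContinuousLinearMap.adjoint H) (H (x k) - z')⟫)
    (hxmin : ∀ k x', Lt k (x (k + 1)) (z k) (w k) ≤ Lt k x' (z k) (w k))
    (hzmin : ∀ k z', L (x (k + 1)) (z (k + 1)) (w k) ≤ L (x (k + 1)) z' (w k))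
    (hw : ∀ k, w (k + 1) = w k + β • (H (x (k + 1)) - z (k + 1)))
    (hwgrad : ∀ k, w k = gradient h (z k)) :
    ∀ k, L (x k) (z k) (w k) - L (x (k + 1)) (z (k + 1)) (w (k + 1)) ≥
      (Lx - β * ‖H‖ ^ 2) / 2 * ‖x k - x (k + 1)‖ ^ 2
      + (m / 2 - Lh ^ 2 / β) * ‖z k - z (k + 1)‖ ^ 2 := by
  intro k
  set d := x (k + 1) - x k with hd
  set r := H (x (k + 1)) - z (k + 1) with hr
  set e := z (k + 1) - z k with he
  set s := H (x k) - z k with hs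
  have hHd : r + e = s + H d := by
    rw [hr, he, hs, hd, map_sub]
    abel
  have hx := hxmin k (x k)
  rw [hLt, hLt, ContinuousLinearMap.adjoint_inner_right, sub_self, ← hd, ← hs] at hx
  have hxz : H (x (k + 1)) - z k = s + H d := by
    rw [hs, hd, map_sub]
    abel
  rw [hxz, inner_add_right] at hx
  simp only [norm_zero, inner_zero_left] at hx
  have hsc := strong_convex_gradient_le hh hconv (z (k + 1)) (z k)
  have hze : z k - z (k + 1) = -e := by rw [he]; abel
  have hxd : x k - x (k + 1) = -d := by rw [hd]; abel
  rw [← hwgrad, hw k, ← hr, hze, inner_neg_right, norm_neg, inner_add_left,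
    real_inner_smul_left] at hsc
  have hHnorm : ‖H d‖ ^ 2 ≤ ‖H‖ ^ 2 * ‖d‖ ^ 2 := by
    rw [← mul_pow]
    exact pow_le_pow_left₀ (norm_nonneg _) (H.le_opNorm d) 2
  have hHβ := mul_le_mul_of_nonneg_left hHnorm hβ.le
  have hlipk : β * ‖r‖ ≤ Lh * ‖e‖ := by
    have := hlip (z (k + 1)) (z k)
    rwa [← hwgrad, ← hwgrad, hw k, add_sub_cancel_left, norm_smul, Real.norm_of_nonneg hβ.le]
      at this
  have hrβ : β * ‖r‖ ^ 2 ≤ Lh ^ 2 / β * ‖e‖ ^ 2 := by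
    have := pow_le_pow_left₀ (by positivity) hlipk 2
    rw [div_mul_eq_mul_div, le_div_iff₀ hβ]
    linarith
  -- The two expansions of `‖H x (k + 1) - z k‖ ^ 2`, centred at `r` and at `s`.
  have hre := norm_add_sq_real r e
  have hsd := norm_add_sq_real s (H d)
  have hwin : ⟪w k, r⟫ + ⟪w k, e⟫ = ⟪w k, s⟫ + ⟪w k, H d⟫ := by
    rw [← inner_add_right, ← inner_add_right, hHd]
  rw [hHd] at hre
  rw [real_inner_comm] at hsd
  have heβ : 0 ≤ β * ‖e‖ ^ 2 := by positivity
  have hexp : β * (‖r‖ ^ 2 + 2 * ⟪r, e⟫ + ‖e‖ ^ 2) =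
      β * (‖s‖ ^ 2 + 2 * ⟪H d, s⟫ + ‖H d‖ ^ 2) := by
    rw [← hre, hsd]
  rw [hL, hL, hw k, ← hr, ← hs, hze, hxd, norm_neg, norm_neg, inner_add_left,
    real_inner_smul_left, real_inner_self_eq_norm_sq]
  linarith
end
end

section
/- (Theorem 1, part a: vanishing residuals.) Assume: (i) the function (x, z) ↦ h(z) + f(x) is bounded below on the set {(x, z) : z = Hx}; (ii) h is m-strongly convex with L_h-Lipschitz gradient; (iii) w_k = ∇h(z_k) for every k; (iv) β ≥ L_h, β·m > 2L_h², and L_x > β‖H‖². Then the sequence L_β(x_k, z_k, w_k) converges, and the primal and dual residues vanish: ‖x_{k+1} − x_k‖ → 0, ‖z_{k+1} − z_k‖ → 0, and ‖w_{k+1} − w_k‖ → 0 as k → ∞. -/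
/-!
The augmented Lagrangian `L (x k) (z k) (w k)` decreases along the iterates by at least a positive
multiple of `‖x (k+1) - x k‖ ^ 2 + ‖z (k+1) - z k‖ ^ 2`, and it is bounded below; hence it converges
and the residuals vanish.

* The `x`-step decreases it by at least `(Lx - β ‖H‖²) / 2 * ‖x (k+1) - x k‖ ^ 2`, comparing the linearized
  Lagrangian at `x (k+1)` and at `x k`.
* Since `w (k+1) = ∇h (z (k+1))`, the first-order form of strong convexity
  (`strong_convex_first_order`) shows that the `z`-step decreases it by at least
  `m / 2 * ‖z (k+1) - z k‖ ^ 2`. The `w`-step increases it by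
  `‖w (k+1) - w k‖ ^ 2 / β ≤ Lh ^ 2 / β * ‖z (k+1) - z k‖ ^ 2`, with a strictly
  smaller coefficient because `β m > 2 Lh²`.
* For the lower bound, `w k = ∇h (z k)` gives `L (x k) (z k) (w k) ≥ h (H (x k)) + f (x k)` once
  `h y ≤ h a + ⟪∇h a, y - a⟫ + β / 2 * ‖y - a‖ ^ 2` is known (`upper_quadratic_bound`).
-/

open scoped RealInnerProductSpace
open Filter Topology

noncomputable section

/-- First-order characterization of strong convexity for a differentiable function, obtained by
restricting to the line through `a` and `b`. -/
lemma strong_convex_first_order {E : Type*} [NormedAddCommGroup E] [InnerProductSpace ℝ E]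
    [CompleteSpace E] {h : E → ℝ} {m : ℝ} (hh : Differentiable ℝ h)
    (hconv : ConvexOn ℝ Set.univ (fun z => h z - m / 2 * ‖z‖ ^ 2)) (a b : E) :
    h a + ⟪gradient h a, b - a⟫ + m / 2 * ‖b - a‖ ^ 2 ≤ h b := by
  have hline : HasDerivAt (fun t : ℝ => AffineMap.lineMap a b t) (b - a) (0 : ℝ) :=
    AffineMap.hasDerivAt_lineMap
  have hgrad : HasFDerivAt h (InnerProductSpace.toDual ℝ E (gradient h a))
      (AffineMap.lineMap a b (0 : ℝ)) := by
    rw [AffineMap.lineMap_apply_zero]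
    exact (hh a).hasGradientAt.hasFDerivAt
  have hderiv := (hgrad.comp_hasDerivAt (0 : ℝ) hline).sub (hline.norm_sq.const_mul (m / 2))
  have hcv := hconv.comp_affineMap (AffineMap.lineMap a b : ℝ →ᵃ[ℝ] E)
  have hslope := hcv.le_slope_of_hasDerivAt (x := 0) (y := 1) (by simp) (by simp) one_pos hderiv
  simp only [slope_def_field, Function.comp_apply, AffineMap.lineMap_apply_zero,
    AffineMap.lineMap_apply_one, sub_zero, div_one, InnerProductSpace.toDual_apply_apply] at hslope
  rw [norm_sub_sq_real, real_inner_comm a b]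
  rw [inner_sub_right a b a, real_inner_self_eq_norm_sq] at hslope
  linarith

/-- A quadratic upper bound with constant `β`. Strong monotonicity of the gradient together with its
Lipschitz bound forces `m ≤ Lh` when `y ≠ a`, so `β m > 2 Lh²` yields `Lh ≤ β / 2`; convexity at the second point
then suffices, without the sharp descent lemma. -/
lemma upper_quadratic_bound {E : Type*} [NormedAddCommGroup E] [InnerProductSpace ℝ E]
    [CompleteSpace E] {h : E → ℝ} {m Lh β : ℝ} (hh : Differentiable ℝ h)
    (hm : 0 < m) (hLh : 0 < Lh) (hβ : 0 < β)
    (hconv : ConvexOn ℝ Set.univ (fun z => h z - m / 2 * ‖z‖ ^ 2))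
    (hlip : ∀ z1 z2 : E, ‖gradient h z1 - gradient h z2‖ ≤ Lh * ‖z1 - z2‖)
    (hβm : β * m > 2 * Lh ^ 2) (a y : E) :
    h y ≤ h a + ⟪gradient h a, y - a⟫ + β / 2 * ‖y - a‖ ^ 2 := by
  have h1 := strong_convex_first_order hh hconv a y
  have h2 := strong_convex_first_order hh hconv y a
  have hcs : ⟪gradient h y - gradient h a, y - a⟫ ≤ Lh * ‖y - a‖ ^ 2 := by
    refine (real_inner_le_norm _ _).trans ?_
    have := mul_le_mul_of_nonneg_right (hlip y a) (norm_nonneg (y - a))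
    linarith
  rw [inner_sub_left] at hcs
  rw [← neg_sub y a, inner_neg_right, norm_neg] at h2
  have hD : 0 ≤ ‖y - a‖ ^ 2 := by positivity
  have hmL : m * ‖y - a‖ ^ 2 ≤ Lh * ‖y - a‖ ^ 2 := by linarith
  have hLβ : Lh * ‖y - a‖ ^ 2 ≤ β / 2 * ‖y - a‖ ^ 2 := by
    have e1 : β * (m * ‖y - a‖ ^ 2) ≤ β * (Lh * ‖y - a‖ ^ 2) :=
      mul_le_mul_of_nonneg_left hmL hβ.le
    have e2 : 2 * Lh ^ 2 * ‖y - a‖ ^ 2 ≤ β * m * ‖y - a‖ ^ 2 :=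
      mul_le_mul_of_nonneg_right hβm.le hD
    have e3 : Lh * (Lh * ‖y - a‖ ^ 2) ≤ Lh * (β / 2 * ‖y - a‖ ^ 2) := by linarith
    exact le_of_mul_le_mul_left e3 hLh
  have : 0 ≤ m / 2 * ‖y - a‖ ^ 2 := by positivity
  linarith

/-- If `c * u k ^ 2` is dominated by a null sequence with `c > 0` and `u ≥ 0`, then `u → 0`. -/
lemma tendsto_zero_of_mul_sq_le {u d : ℕ → ℝ} {c : ℝ} (hc : 0 < c) (hu : ∀ k, 0 ≤ u k)
    (hd : Tendsto d atTop (𝓝 0)) (hle : ∀ k, c * u k ^ 2 ≤ d k) : Tendsto u atTop (𝓝 0) := by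
  have hsq : Tendsto (fun k => u k ^ 2) atTop (𝓝 0) := by
    refine squeeze_zero (fun k => sq_nonneg _) (g := fun k => d k / c) (fun k => ?_) ?_
    · rw [le_div_iff₀ hc]
      linarith [hle k]
    · simpa using hd.div_const c
  have := hsq.sqrt
  simpa [Real.sqrt_sq (hu _)] using this

/-- Theorem 1, part a: convergence of Lagrangian values and vanishing residuals. -/
theorem ladmm_vanishing_residuals
    (n p : ℕ)
    (H : EuclideanSpace ℝ (Fin n) →L[ℝ] EuclideanSpace ℝ (Fin p))
    (f : EuclideanSpace ℝ (Fin n) → ℝ)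
    (h : EuclideanSpace ℝ (Fin p) → ℝ) (hh : Differentiable ℝ h)
    (m Lh β Lx : ℝ) (hm : 0 < m) (hLh : 0 < Lh) (hβ : 0 < β) (hLx : 0 < Lx)
    (hbdd : ∃ C : ℝ, ∀ x' : EuclideanSpace ℝ (Fin n), C ≤ h (H x') + f x')
    (hconv : ConvexOn ℝ Set.univ (fun z => h z - m / 2 * ‖z‖ ^ 2))
    (hlip : ∀ z1 z2 : EuclideanSpace ℝ (Fin p),
      ‖gradient h z1 - gradient h z2‖ ≤ Lh * ‖z1 - z2‖)
    (hβLh : β ≥ Lh) (hβm : β * m > 2 * Lh ^ 2) (hLxβ : Lx > β * ‖H‖ ^ 2)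
    (x : ℕ → EuclideanSpace ℝ (Fin n))
    (z w : ℕ → EuclideanSpace ℝ (Fin p))
    (L : EuclideanSpace ℝ (Fin n) → EuclideanSpace ℝ (Fin p) → EuclideanSpace ℝ (Fin p) → ℝ)
    (hL : ∀ x' z' w', L x' z' w' = h z' + f x' + ⟪w', H x' - z'⟫ + β / 2 * ‖H x' - z'‖ ^ 2)
    (Lt : ℕ → EuclideanSpace ℝ (Fin n) → EuclideanSpace ℝ (Fin p) →
      EuclideanSpace ℝ (Fin p) → ℝ)
    (hLt : ∀ k x' z' w', Lt k x' z' w' = h z' + f x' + ⟪w', H x' - z'⟫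
      + Lx / 2 * ‖x' - x k‖ ^ 2
      + β * ⟪x' - x k, (ContinuousLinearMap.adjoint H) (H (x k) - z')⟫)
    (hxmin : ∀ k x', Lt k (x (k + 1)) (z k) (w k) ≤ Lt k x' (z k) (w k))
    (hzmin : ∀ k z', L (x (k + 1)) (z (k + 1)) (w k) ≤ L (x (k + 1)) z' (w k))
    (hw : ∀ k, w (k + 1) = w k + β • (H (x (k + 1)) - z (k + 1)))
    (hwgrad : ∀ k, w k = gradient h (z k)) :
    (∃ l : ℝ, Tendsto (fun k => L (x k) (z k) (w k)) atTop (𝓝 l)) ∧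
    Tendsto (fun k => ‖x (k + 1) - x k‖) atTop (𝓝 0) ∧
    Tendsto (fun k => ‖z (k + 1) - z k‖) atTop (𝓝 0) ∧
    Tendsto (fun k => ‖w (k + 1) - w k‖) atTop (𝓝 0) := by
  obtain ⟨C, hC⟩ := hbdd
  have hxstep : ∀ k, L (x (k + 1)) (z k) (w k) + (Lx - β * ‖H‖ ^ 2) / 2 * ‖x (k + 1) - x k‖ ^ 2
      ≤ L (x k) (z k) (w k) := by
    intro k
    have hmin := hxmin k (x k)
    rw [hLt, hLt, ContinuousLinearMap.adjoint_inner_right,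
      ContinuousLinearMap.adjoint_inner_right] at hmin
    simp only [sub_self, norm_zero, map_zero, inner_zero_left] at hmin
    have hexp : ‖H (x (k + 1)) - z k‖ ^ 2 = ‖H (x (k + 1) - x k)‖ ^ 2
        + 2 * ⟪H (x (k + 1) - x k), H (x k) - z k⟫ + ‖H (x k) - z k‖ ^ 2 := by
      rw [← norm_add_sq_real, map_sub, sub_add_sub_cancel]
    have hop : β * ‖H (x (k + 1) - x k)‖ ^ 2 ≤ β * (‖H‖ ^ 2 * ‖x (k + 1) - x k‖ ^ 2) := by
      rw [← mul_pow]
      gcongr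
      exact H.le_opNorm _
    rw [hL, hL, hexp]
    linarith
  have hzstep : ∀ k, L (x (k + 1)) (z (k + 1)) (w k) + m / 2 * ‖z (k + 1) - z k‖ ^ 2
      ≤ L (x (k + 1)) (z k) (w k) := by
    intro k
    have hsc := strong_convex_first_order hh hconv (z (k + 1)) (z k)
    rw [← hwgrad, hw, ← neg_sub (z (k + 1)) (z k), inner_neg_right, norm_neg, inner_add_left,
      real_inner_smul_left] at hsc
    have hexp : ‖H (x (k + 1)) - z k‖ ^ 2 = ‖H (x (k + 1)) - z (k + 1)‖ ^ 2
        + 2 * ⟪H (x (k + 1)) - z (k + 1), z (k + 1) - z k⟫ + ‖z (k + 1) - z k‖ ^ 2 := by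
      rw [← norm_add_sq_real, sub_add_sub_cancel]
    have hin : ⟪w k, H (x (k + 1)) - z k⟫ = ⟪w k, H (x (k + 1)) - z (k + 1)⟫
        + ⟪w k, z (k + 1) - z k⟫ := by
      rw [← inner_add_right, sub_add_sub_cancel]
    have : 0 ≤ β * ‖z (k + 1) - z k‖ ^ 2 := by positivity
    rw [hL, hL, hexp, hin]
    linarith
  have hdw : ∀ k, ‖w (k + 1) - w k‖ ≤ Lh * ‖z (k + 1) - z k‖ := by
    intro k
    rw [hwgrad, hwgrad]
    exact hlip _ _
  have hwstep : ∀ k, L (x (k + 1)) (z (k + 1)) (w (k + 1))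
      ≤ L (x (k + 1)) (z (k + 1)) (w k) + Lh ^ 2 / β * ‖z (k + 1) - z k‖ ^ 2 := by
    intro k
    have hsq := pow_le_pow_left₀ (norm_nonneg _) (hdw k) 2
    rw [hw, add_sub_cancel_left, norm_smul, mul_pow, mul_pow, Real.norm_eq_abs, sq_abs] at hsq
    have hsq' : β * ‖H (x (k + 1)) - z (k + 1)‖ ^ 2 ≤ Lh ^ 2 / β * ‖z (k + 1) - z k‖ ^ 2 := by
      rw [div_mul_eq_mul_div, le_div_iff₀ hβ]
      linarith
    rw [hL, hL, hw, inner_add_left, real_inner_smul_left, real_inner_self_eq_norm_sq]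
    linarith
  have hc₁ : 0 < (Lx - β * ‖H‖ ^ 2) / 2 := by linarith
  have hc₂ : 0 < m / 2 - Lh ^ 2 / β := by
    rw [sub_pos, div_lt_iff₀ hβ]
    linarith
  have hdesc : ∀ k, (Lx - β * ‖H‖ ^ 2) / 2 * ‖x (k + 1) - x k‖ ^ 2
      + (m / 2 - Lh ^ 2 / β) * ‖z (k + 1) - z k‖ ^ 2
      ≤ L (x k) (z k) (w k) - L (x (k + 1)) (z (k + 1)) (w (k + 1)) := by
    intro k
    linarith [hxstep k, hzstep k, hwstep k]
  have hlow : ∀ k, C ≤ L (x k) (z k) (w k) := by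
    intro k
    have := upper_quadratic_bound hh hm hLh hβ hconv hlip hβm (z k) (H (x k))
    rw [← hwgrad] at this
    rw [hL]
    linarith [hC (x k)]
  have hnx : ∀ k, 0 ≤ (Lx - β * ‖H‖ ^ 2) / 2 * ‖x (k + 1) - x k‖ ^ 2 :=
    fun k => mul_nonneg hc₁.le (sq_nonneg _)
  have hnz : ∀ k, 0 ≤ (m / 2 - Lh ^ 2 / β) * ‖z (k + 1) - z k‖ ^ 2 :=
    fun k => mul_nonneg hc₂.le (sq_nonneg _)
  have hanti : Antitone (fun k => L (x k) (z k) (w k)) :=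
    antitone_nat_of_succ_le fun k => by linarith [hdesc k, hnx k, hnz k]
  have hlim := tendsto_atTop_ciInf hanti ⟨C, by rintro _ ⟨k, rfl⟩; exact hlow k⟩
  have hdiff : Tendsto
      (fun k => L (x k) (z k) (w k) - L (x (k + 1)) (z (k + 1)) (w (k + 1))) atTop (𝓝 0) := by
    simpa using hlim.sub (hlim.comp (tendsto_add_atTop_nat 1))
  have hz0 : Tendsto (fun k => ‖z (k + 1) - z k‖) atTop (𝓝 0) :=
    tendsto_zero_of_mul_sq_le hc₂ (fun _ => norm_nonneg _) hdiff
      fun k => by linarith [hdesc k, hnx k]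
  refine ⟨⟨_, hlim⟩, ?_, hz0, ?_⟩
  · exact tendsto_zero_of_mul_sq_le hc₁ (fun _ => norm_nonneg _) hdiff
      fun k => by linarith [hdesc k, hnz k]
  · exact squeeze_zero (fun _ => norm_nonneg _) hdw (by simpa using hz0.const_mul Lh)
end
end
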